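/- Let X and Y be measurable spaces, ν a probability measure on X, P a probability measure on X, and π a probability measure on X × Y with x-marginal P. If S^ν(P) and H^ν(π) are both finite, then IG(π, P) := −H^P(π) = S^ν(P) − H^ν(π). Equivalently, denoting by Q the y-marginal of π, D_KL(π | P × Q) = D_KL(π | ν × Q) − D_KL(P | ν). -/

import Mathlib

open MeasureTheory ENNReal ProbabilityTheory

noncomputable section
open scoped Classical

/-- The extended-real integral `∫ f⁺ dμ − ∫ f⁻ dμ`, valued in `EReal`. -/
def eInt {α : Type*} [MeasurableSpace α] (μ : Measure α) (f : α → ℝ) : EReal :=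
  ((∫⁻ x, ENNReal.ofReal (f x) ∂μ : ℝ≥0∞) : EReal)
    - ((∫⁻ x, ENNReal.ofReal (-f x) ∂μ : ℝ≥0∞) : EReal)

/-- The extended integral of `f` with respect to `μ` is well defined (not `+∞ − ∞`). -/
def IntWellDef {α : Type*} [MeasurableSpace α] (μ : Measure α) (f : α → ℝ) : Prop :=
  (∫⁻ x, ENNReal.ofReal (f x) ∂μ ≠ ⊤) ∨ (∫⁻ x, ENNReal.ofReal (-f x) ∂μ ≠ ⊤)

/-- Kullback–Leibler divergence `D_KL(μ | ν) = ∫ log (dμ/dν) dμ` if `μ ≪ ν`, `+∞` otherwise. -/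
def KL {α : Type*} [MeasurableSpace α] (μ ν : Measure α) : EReal :=
  if μ ≪ ν then eInt μ (fun x => Real.log ((μ.rnDeriv ν x).toReal)) else ⊤

/-- `S^ν(P) = −sup{∫ c dP : c measurable, ∫ e^c dν = 1, ∫ c dP well defined}`. -/
def SEnt {X : Type*} [MeasurableSpace X] (ν P : Measure X) : EReal :=
  - sSup { r : EReal | ∃ c : X → ℝ, Measurable c ∧ (∫ x, Real.exp (c x) ∂ν) = 1 ∧
      IntWellDef P c ∧ r = eInt P c }

/-- `H^{ν̂}(π)`: entropy of `π` relative to the probability kernel `ν̂ = κ`, i.e. minus the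
supremum of `∫ c dπ` over `κ`-normalized measurable functions with well-defined integral. -/
def Hker {X Y : Type*} [MeasurableSpace X] [MeasurableSpace Y]
    (κ : Kernel Y X) (π : Measure (X × Y)) : EReal :=
  - sSup { r : EReal | ∃ c : X × Y → ℝ, Measurable c ∧
      (∀ y, (∫ x, Real.exp (c (x, y)) ∂(κ y)) = 1) ∧ IntWellDef π c ∧ r = eInt π c }

/-- `H^ν(π)`: entropy of `π` relative to an a priori probability `ν` on `X`. -/
def Hnu {X Y : Type*} [MeasurableSpace X] [MeasurableSpace Y]
    (ν : Measure X) (π : Measure (X × Y)) : EReal :=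
  - sSup { r : EReal | ∃ c : X × Y → ℝ, Measurable c ∧
      (∀ y, (∫ x, Real.exp (c (x, y)) ∂ν) = 1) ∧ IntWellDef π c ∧ r = eInt π c }

/-- The probability `ν̂ dQ` on `X × Y`, defined by
`∫ f d(ν̂ dQ) = ∫_Y ∫_X f(x,y) dν̂^y(x) dQ(y)`. -/
def kernMeas {X Y : Type*} [MeasurableSpace X] [MeasurableSpace Y]
    (κ : Kernel Y X) (Q : Measure Y) : Measure (X × Y) :=
  (Q.compProd κ).map Prod.swap

lemma aux_int_one_iff {α : Type*} [MeasurableSpace α] (μ : Measure α) (f : α → ℝ)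
    (hf : Measurable f) (h0 : ∀ x, 0 ≤ f x) :
    (∫ x, f x ∂μ) = 1 ↔ ∫⁻ x, ENNReal.ofReal (f x) ∂μ = 1 := by
  rw [integral_eq_lintegral_of_nonneg_ae (Filter.Eventually.of_forall h0)
    hf.aestronglyMeasurable]
  rw [ENNReal.toReal_eq_one_iff]

lemma aux_eInt_congr {α : Type*} [MeasurableSpace α] {μ : Measure α} {f g : α → ℝ}
    (h : f =ᵐ[μ] g) : eInt μ f = eInt μ g := by
  unfold eInt
  have h1 : ∫⁻ x, ENNReal.ofReal (f x) ∂μ = ∫⁻ x, ENNReal.ofReal (g x) ∂μ :=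
    lintegral_congr_ae (h.mono fun x hx => by simp [hx])
  have h2 : ∫⁻ x, ENNReal.ofReal (-f x) ∂μ = ∫⁻ x, ENNReal.ofReal (-g x) ∂μ :=
    lintegral_congr_ae (h.mono fun x hx => by simp [hx])
  rw [h1, h2]

lemma aux_eInt_mono {α : Type*} [MeasurableSpace α] {μ : Measure α} {f g : α → ℝ}
    (h : f ≤ᵐ[μ] g) : eInt μ f ≤ eInt μ g := by
  unfold eInt
  apply EReal.sub_le_sub
  · exact_mod_cast lintegral_mono_ae (h.mono fun x hx => ENNReal.ofReal_le_ofReal hx)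
  · exact_mod_cast lintegral_mono_ae
      (h.mono fun x hx => ENNReal.ofReal_le_ofReal (neg_le_neg hx))

lemma aux_eInt_integrable {α : Type*} [MeasurableSpace α] {μ : Measure α} {f : α → ℝ}
    (h : Integrable f μ) : eInt μ f = ((∫ x, f x ∂μ : ℝ) : EReal) := by
  unfold eInt
  rw [integral_eq_lintegral_pos_part_sub_lintegral_neg_part h, EReal.coe_sub]
  have h1 : ∫⁻ x, ENNReal.ofReal (f x) ∂μ ≠ ⊤ := h.lintegral_lt_top.ne
  have h2 : ∫⁻ x, ENNReal.ofReal (-f x) ∂μ ≠ ⊤ := h.neg.lintegral_lt_top.ne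
  lift ∫⁻ x, ENNReal.ofReal (f x) ∂μ to NNReal using h1 with a
  lift ∫⁻ x, ENNReal.ofReal (-f x) ∂μ to NNReal using h2 with b
  rfl

lemma aux_integrable_of {α : Type*} [MeasurableSpace α] {μ : Measure α} {f : α → ℝ}
    (hm : AEMeasurable f μ)
    (h1 : ∫⁻ x, ENNReal.ofReal (f x) ∂μ ≠ ⊤) (h2 : ∫⁻ x, ENNReal.ofReal (-f x) ∂μ ≠ ⊤) :
    Integrable f μ := by
  refine ⟨hm.aestronglyMeasurable, ?_⟩
  rw [hasFiniteIntegral_iff_norm]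
  have : ∀ x, ENNReal.ofReal ‖f x‖ ≤ ENNReal.ofReal (f x) + ENNReal.ofReal (-f x) := by
    intro x
    rw [Real.norm_eq_abs]
    rcases abs_cases (f x) with ⟨h, _⟩ | ⟨h, _⟩ <;> rw [h]
    · exact le_self_add
    · exact le_add_self
  refine (lintegral_mono this).trans_lt ?_
  rw [lintegral_add_left' hm.ennreal_ofReal]
  exact ENNReal.add_lt_top.2 ⟨h1.lt_top, h2.lt_top⟩

lemma aux_eInt_top {α : Type*} [MeasurableSpace α] {μ : Measure α} {f : α → ℝ}
    (h1 : ∫⁻ x, ENNReal.ofReal (f x) ∂μ = ⊤) (h2 : ∫⁻ x, ENNReal.ofReal (-f x) ∂μ ≠ ⊤) :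
    eInt μ f = ⊤ := by
  unfold eInt
  rw [h1, EReal.coe_ennreal_top]
  lift ∫⁻ x, ENNReal.ofReal (-f x) ∂μ to NNReal using h2 with b
  exact EReal.top_sub_coe b

lemma aux_eInt_fin {α : Type*} [MeasurableSpace α] {μ : Measure α} {f : α → ℝ}
    (hm : AEMeasurable f μ) (ht : eInt μ f ≠ ⊤) (hb : eInt μ f ≠ ⊥) : Integrable f μ := by
  have h2 : ∫⁻ x, ENNReal.ofReal (-f x) ∂μ ≠ ⊤ := by
    intro h
    apply hb
    unfold eInt
    rw [h, EReal.coe_ennreal_top]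
    exact EReal.sub_top _
  have h1 : ∫⁻ x, ENNReal.ofReal (f x) ∂μ ≠ ⊤ := fun h => ht (aux_eInt_top h h2)
  exact aux_integrable_of hm h1 h2

lemma aux_gibbs {α : Type*} [MeasurableSpace α] {μ l : Measure α}
    [IsProbabilityMeasure μ] [IsProbabilityMeasure l] (hac : μ ≪ l) (c : α → ℝ)
    (hc : Measurable c) (h1 : ∫⁻ x, ENNReal.ofReal (Real.exp (c x)) ∂l ≤ 1) :
    ∃ h : α → ℝ, Integrable h μ ∧ ∫ x, h x ∂μ ≤ 1 ∧
      ∀ᵐ x ∂μ, c x - Real.log ((μ.rnDeriv l x).toReal) ≤ h x - 1 := by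
  set f := fun x => (μ.rnDeriv l x).toReal with hf
  have hfm : Measurable f := (Measure.measurable_rnDeriv μ l).ennreal_toReal
  set h := fun x => Real.exp (c x) * (f x)⁻¹ with hh
  have hhm : Measurable h := (hc.exp).mul hfm.inv
  have h0 : ∀ x, 0 ≤ h x := fun x => by positivity
  have hl : ∫⁻ x, ENNReal.ofReal (h x) ∂μ ≤ 1 := by
    rw [← lintegral_rnDeriv_mul hac hhm.ennreal_ofReal.aemeasurable]
    refine le_trans (lintegral_mono_ae ?_) h1
    filter_upwards [Measure.rnDeriv_lt_top μ l] with x hx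
    have : μ.rnDeriv l x = ENNReal.ofReal (f x) := (ENNReal.ofReal_toReal hx.ne).symm
    rw [this, ← ENNReal.ofReal_mul (by positivity)]
    apply ENNReal.ofReal_le_ofReal
    have : f x * (f x)⁻¹ ≤ 1 := mul_inv_le_one
    calc f x * h x = Real.exp (c x) * (f x * (f x)⁻¹) := by simp only [hh]; ring
      _ ≤ Real.exp (c x) * 1 := by gcongr
      _ = _ := mul_one _
  refine ⟨h, ?_, ?_, ?_⟩
  · refine aux_integrable_of hhm.aemeasurable (hl.trans_lt ENNReal.one_lt_top).ne ?_
    simp [ENNReal.ofReal_of_nonpos, h0]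
  · rw [integral_eq_lintegral_of_nonneg_ae (Filter.Eventually.of_forall h0)
      hhm.aestronglyMeasurable]
    exact ENNReal.toReal_le_of_le_ofReal zero_le_one (by simpa using hl)
  · filter_upwards [Measure.rnDeriv_pos hac, hac.ae_le (Measure.rnDeriv_lt_top μ l)] with x hx hx'
    have hp : 0 < f x := ENNReal.toReal_pos hx.ne' hx'.ne
    have := Real.log_le_sub_one_of_pos (x := h x) (by positivity)
    simp only [hh] at this
    rw [Real.log_mul (by positivity) (by positivity), Real.log_exp, Real.log_inv] at this
    simp only [hh]
    linarith

lemma aux_neg_fin {α : Type*} [MeasurableSpace α] {μ l : Measure α}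
    [IsProbabilityMeasure μ] [IsProbabilityMeasure l] (hac : μ ≪ l) :
    ∫⁻ x, ENNReal.ofReal (-Real.log ((μ.rnDeriv l x).toReal)) ∂μ ≠ ⊤ := by
  obtain ⟨h, hi, -, hle⟩ := aux_gibbs hac (fun _ => 0) measurable_const (by simp)
  refine ((lintegral_mono_ae ?_).trans_lt (hi.sub (integrable_const 1)).lintegral_lt_top).ne
  filter_upwards [hle] with x hx
  apply ENNReal.ofReal_le_ofReal
  simpa using hx

lemma aux_logm {α : Type*} [MeasurableSpace α] (μ l : Measure α) :
    Measurable (fun x => Real.log ((μ.rnDeriv l x).toReal)) :=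
  (Measure.measurable_rnDeriv μ l).ennreal_toReal.log

/-- Abstract Donsker–Varadhan type formula. -/
lemma aux_sup {α : Type*} [MeasurableSpace α] (μ l : Measure α)
    [IsProbabilityMeasure μ] [IsProbabilityMeasure l] (C : (α → ℝ) → Prop)
    (hC1 : ∀ c, Measurable c → C c → ∫⁻ x, ENNReal.ofReal (Real.exp (c x)) ∂l ≤ 1)
    (hC2 : μ ≪ l → ∃ g : α → ℝ, Measurable g ∧ (∀ x, 0 ≤ g x) ∧
      (g =ᵐ[l] fun x => (μ.rnDeriv l x).toReal) ∧
      ∀ ε : ℝ, 0 < ε → ε < 1 → C (fun x => Real.log ((1 - ε) * g x + ε)))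
    (hC3 : ¬ μ ≪ l → ∃ A, MeasurableSet A ∧ μ A ≠ 0 ∧
      ∀ t : ℝ, 0 ≤ t → C (A.indicator fun _ => t)) :
    sSup { r : EReal | ∃ c : α → ℝ, Measurable c ∧ C c ∧ IntWellDef μ c ∧ r = eInt μ c }
      = KL μ l := by
  by_cases hac : μ ≪ l
  · rw [KL, if_pos hac]
    have hneg := aux_neg_fin hac
    have hlm := aux_logm μ l
    set L := fun x => Real.log ((μ.rnDeriv l x).toReal) with hL
    apply le_antisymm
    · apply sSup_le
      rintro r ⟨c, hc, hCc, -, rfl⟩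
      by_cases htop : ∫⁻ x, ENNReal.ofReal (L x) ∂μ = ⊤
      · rw [aux_eInt_top htop hneg]; exact le_top
      have hLi : Integrable L μ := aux_integrable_of hlm.aemeasurable htop hneg
      obtain ⟨h, hi, hi1, hle⟩ := aux_gibbs hac c hc (hC1 c hc hCc)
      have hG : Integrable (fun x => L x + (h x - 1)) μ := hLi.add (hi.sub (integrable_const 1))
      calc eInt μ c ≤ eInt μ (fun x => L x + (h x - 1)) :=
            aux_eInt_mono (hle.mono fun x hx => by simp only [hL]; linarith)
        _ = _ := aux_eInt_integrable hG
        _ ≤ ((∫ x, L x ∂μ : ℝ) : EReal) := by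
            have hi2 : Integrable (fun x => h x - 1) μ := hi.sub (integrable_const 1)
            rw [EReal.coe_le_coe_iff, integral_add hLi hi2, integral_sub hi (integrable_const 1)]
            simp; linarith
        _ = _ := (aux_eInt_integrable hLi).symm
    · obtain ⟨g, hgm, hg0, hge, hCg⟩ := hC2 hac
      set S := sSup { r : EReal | ∃ c : α → ℝ, Measurable c ∧ C c ∧ IntWellDef μ c ∧
        r = eInt μ c } with hS
      by_cases hST : S = ⊤
      · rw [hST]; exact le_top
      -- the approximants
      have key : ∀ ε : ℝ, 0 < ε → ε < 1 → Integrable L μ ∧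
          ((∫ x, L x ∂μ + Real.log (1 - ε) : ℝ) : EReal) ≤ S := by
        intro ε h0 h1
        set c := fun x => Real.log ((1 - ε) * g x + ε) with hcdef
        have hcm : Measurable c := ((hgm.const_mul _).add_const _).log
        have hlow : ∀ x, Real.log ε ≤ c x := fun x => by
          apply Real.log_le_log h0
          have := mul_nonneg (sub_nonneg.2 h1.le) (hg0 x)
          linarith
        have hnegc : ∫⁻ x, ENNReal.ofReal (-c x) ∂μ ≠ ⊤ := by
          refine ((lintegral_mono (g := fun _ => ENNReal.ofReal (-Real.log ε))
            fun x => ENNReal.ofReal_le_ofReal (neg_le_neg (hlow x))).trans_lt ?_).ne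
          simp
        have hmem : eInt μ c ≤ S := le_sSup ⟨c, hcm, hCg ε h0 h1, Or.inr hnegc, rfl⟩
        have hposc : ∫⁻ x, ENNReal.ofReal (c x) ∂μ ≠ ⊤ := by
          intro h
          rw [aux_eInt_top h hnegc] at hmem
          exact hST (top_le_iff.1 hmem)
        have hci : Integrable c μ := aux_integrable_of hcm.aemeasurable hposc hnegc
        have hLc : ∀ᵐ x ∂μ, L x ≤ c x - Real.log (1 - ε) := by
          filter_upwards [Measure.rnDeriv_pos hac, hac.ae_le (Measure.rnDeriv_lt_top μ l),
            hac.ae_le hge] with x hx hx' hgx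
          have hp : 0 < g x := by rw [hgx]; exact ENNReal.toReal_pos hx.ne' hx'.ne
          have h1' : 0 < 1 - ε := sub_pos.2 h1
          have : Real.log ((1 - ε) * g x) ≤ c x :=
            Real.log_le_log (mul_pos h1' hp) (by linarith)
          rw [Real.log_mul h1'.ne' hp.ne', hgx] at this
          simp only [hL]
          linarith
        have hci' : Integrable (fun x => c x - Real.log (1 - ε)) μ :=
          hci.sub (integrable_const _)
        have hLi : Integrable L μ := by
          refine aux_integrable_of hlm.aemeasurable
            ((lintegral_mono_ae ?_).trans_lt hci'.lintegral_lt_top).ne hneg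
          exact hLc.mono fun x hx => ENNReal.ofReal_le_ofReal hx
        refine ⟨hLi, le_trans ?_ hmem⟩
        rw [aux_eInt_integrable hci, EReal.coe_le_coe_iff]
        have := integral_mono_ae hLi hci' hLc
        rw [integral_sub hci (integrable_const _)] at this
        simp at this
        linarith
      have hLi := (key (1/2) (by norm_num) (by norm_num)).1
      rw [aux_eInt_integrable hLi]
      have hSB : S ≠ ⊥ := fun h => by
        have := (key (1/2) (by norm_num) (by norm_num)).2
        rw [h, le_bot_iff] at this
        exact EReal.coe_ne_bot _ this
      lift S to ℝ using ⟨hST, hSB⟩ with s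
      rw [EReal.coe_le_coe_iff]
      apply _root_.le_of_forall_pos_le_add
      intro δ hδ
      have := (key (1 - Real.exp (-δ)) (by simp [hδ]) (by simp [Real.exp_pos])).2
      rw [EReal.coe_le_coe_iff] at this
      simp at this
      linarith
  · rw [KL, if_neg hac]
    obtain ⟨A, hA, hA0, hAC⟩ := hC3 hac
    rw [eq_top_iff]
    have hpos : 0 < μ.real A := ENNReal.toReal_pos hA0 (measure_ne_top _ _)
    refine EReal.ge_of_forall_gt_iff_ge.1 ?_
    intro z _
    have ht : 0 ≤ |z| / μ.real A := by positivity
    have hi : Integrable (A.indicator fun _ => |z| / μ.real A) μ :=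
      (integrable_const _).indicator hA
    have : eInt μ (A.indicator fun _ => |z| / μ.real A) = ((|z| : ℝ) : EReal) := by
      rw [aux_eInt_integrable hi, integral_indicator_const _ hA]
      congr 1
      rw [smul_eq_mul]
      field_simp
    refine le_trans ?_ (le_sSup ⟨_, measurable_const.indicator hA, hAC _ ht,
      Or.inl hi.lintegral_lt_top.ne, rfl⟩)
    rw [this, EReal.coe_le_coe_iff]
    exact le_abs_self z

lemma aux_mix {α : Type*} [MeasurableSpace α] (ν : Measure α) [IsProbabilityMeasure ν]
    (g : α → ℝ) (hg : Measurable g) (hg0 : ∀ x, 0 ≤ g x)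
    (h1 : ∫⁻ x, ENNReal.ofReal (g x) ∂ν = 1) (ε : ℝ) (he0 : 0 < ε) (he1 : ε < 1) :
    ∫ x, Real.exp (Real.log ((1 - ε) * g x + ε)) ∂ν = 1 := by
  have h2 := (aux_int_one_iff ν g hg hg0).2 h1
  have hi : Integrable g ν := by
    by_contra h
    rw [integral_undef h] at h2
    exact zero_ne_one h2
  have : ∀ x, Real.exp (Real.log ((1 - ε) * g x + ε)) = (1 - ε) * g x + ε := fun x => by
    apply Real.exp_log
    have := mul_nonneg (sub_nonneg.2 he1.le) (hg0 x)
    linarith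
  simp_rw [this]
  rw [integral_add (hi.const_mul _) (integrable_const _), integral_const_mul, h2]
  simp

lemma aux_ind {α : Type*} [MeasurableSpace α] (ν : Measure α) [IsProbabilityMeasure ν]
    (A : Set α) (hA : ν A = 0) (t : ℝ) :
    ∫ x, Real.exp (A.indicator (fun _ => t) x) ∂ν = 1 := by
  have : (fun x => Real.exp (A.indicator (fun _ => t) x)) =ᵐ[ν] fun _ => 1 := by
    have hA' : ∀ᵐ x ∂ν, x ∉ A := measure_eq_zero_iff_ae_notMem.1 hA
    filter_upwards [hA'] with x hx
    simp [hx]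
  rw [integral_congr_ae this]
  simp

lemma aux_not_ac {α : Type*} [MeasurableSpace α] {μ l : Measure α} (h : ¬ μ ≪ l) :
    ∃ A, MeasurableSet A ∧ l A = 0 ∧ μ A ≠ 0 := by
  by_contra hcon
  push Not at hcon
  exact h (Measure.AbsolutelyContinuous.mk fun s hs h0 => hcon s hs h0)

lemma aux_lint_rn {α : Type*} [MeasurableSpace α] {μ l : Measure α} [IsFiniteMeasure μ]
    [IsFiniteMeasure l] : (fun x => ENNReal.ofReal ((μ.rnDeriv l x).toReal)) =ᵐ[l] μ.rnDeriv l := by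
  filter_upwards [Measure.rnDeriv_lt_top μ l] with x hx
  exact ENNReal.ofReal_toReal hx.ne

lemma aux_SEnt {X : Type*} [MeasurableSpace X] (ν P : Measure X) [IsProbabilityMeasure ν]
    [IsProbabilityMeasure P] : SEnt ν P = - KL P ν := by
  rw [SEnt, aux_sup P ν (fun c => (∫ x, Real.exp (c x) ∂ν) = 1)]
  · intro c hc h
    exact ((aux_int_one_iff ν _ hc.exp fun x => (Real.exp_pos _).le).1 h).le
  · intro hac
    refine ⟨fun x => (P.rnDeriv ν x).toReal, (Measure.measurable_rnDeriv _ _).ennreal_toReal,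
      fun x => ENNReal.toReal_nonneg, Filter.EventuallyEq.rfl, fun ε h0 h1 => ?_⟩
    refine aux_mix ν _ (Measure.measurable_rnDeriv _ _).ennreal_toReal
      (fun x => ENNReal.toReal_nonneg) ?_ ε h0 h1
    rw [lintegral_congr_ae aux_lint_rn, Measure.lintegral_rnDeriv hac, measure_univ]
  · intro hac
    obtain ⟨A, hA, hA0, hA1⟩ := aux_not_ac hac
    exact ⟨A, hA, hA1, fun t _ => aux_ind ν A hA0 t⟩

lemma aux_Hnu {X Y : Type*} [MeasurableSpace X] [MeasurableSpace Y] (ν : Measure X)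
    (pi : Measure (X × Y)) [IsProbabilityMeasure ν] [IsProbabilityMeasure pi] :
    Hnu ν pi = - KL pi (ν.prod (pi.map Prod.snd)) := by
  set Q := pi.map Prod.snd with hQ
  have : IsProbabilityMeasure Q := Measure.isProbabilityMeasure_map measurable_snd.aemeasurable
  rw [Hnu, aux_sup pi (ν.prod Q) (fun c => ∀ y, (∫ x, Real.exp (c (x, y)) ∂ν) = 1)]
  · intro c hc h
    have h' : ∀ y, ∫⁻ x, ENNReal.ofReal (Real.exp (c (x, y))) ∂ν = 1 := fun y =>
      (aux_int_one_iff ν _ (hc.comp measurable_prodMk_right).exp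
        fun x => (Real.exp_pos _).le).1 (h y)
    rw [lintegral_prod_symm' _ hc.exp.ennreal_ofReal]
    simp [h']
  · intro hac
    set g0 : X × Y → ℝ := fun z => (pi.rnDeriv (ν.prod Q) z).toReal with hg0
    have hg0m : Measurable g0 := (Measure.measurable_rnDeriv _ _).ennreal_toReal
    set m : Y → ℝ≥0∞ := fun y => ∫⁻ x, ENNReal.ofReal (g0 (x, y)) ∂ν with hm
    have hmm : Measurable m := hg0m.ennreal_ofReal.lintegral_prod_left'
    set G : Set Y := {y | m y = 1} with hG
    have hGm : MeasurableSet G := hmm (measurableSet_singleton 1)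
    have hmQ : m =ᵐ[Q] fun _ => 1 := by
      refine ae_eq_of_forall_setLIntegral_eq_of_sigmaFinite hmm measurable_const ?_
      intro s hs _
      rw [setLIntegral_one]
      have e1 : Q s = pi (Prod.snd ⁻¹' s) := Measure.map_apply measurable_snd hs
      have e2 : pi (Prod.snd ⁻¹' s) =
          ∫⁻ z in Prod.snd ⁻¹' s, pi.rnDeriv (ν.prod Q) z ∂(ν.prod Q) :=
        (Measure.setLIntegral_rnDeriv hac _).symm
      have e3 : ∫⁻ z in Prod.snd ⁻¹' s, pi.rnDeriv (ν.prod Q) z ∂(ν.prod Q) =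
          ∫⁻ z in Prod.snd ⁻¹' s, ENNReal.ofReal (g0 z) ∂(ν.prod Q) :=
        (lintegral_congr_ae (ae_restrict_of_ae aux_lint_rn)).symm
      rw [e1, e2, e3, ← Set.univ_prod,
        setLIntegral_prod_symm _ hg0m.ennreal_ofReal.aemeasurable]
      simp [hm]
    refine ⟨fun z => if z.2 ∈ G then g0 z else 1,
      Measurable.ite (measurable_snd hGm) hg0m measurable_const, fun z => ?_, ?_, ?_⟩
    · dsimp only
      split_ifs
      · exact ENNReal.toReal_nonneg
      · exact zero_le_one
    · have : ∀ᵐ z ∂(ν.prod Q), z.2 ∈ G := Measure.quasiMeasurePreserving_snd.ae hmQ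
      filter_upwards [this] with z hz
      simp [hz, hg0]
    · intro ε h0 h1 y
      by_cases hy : y ∈ G
      · simp only [hy, if_true]
        exact aux_mix ν (fun x => g0 (x, y)) (hg0m.comp measurable_prodMk_right)
          (fun x => ENNReal.toReal_nonneg) hy ε h0 h1
      · simp [hy]
  · intro hac
    obtain ⟨A, hA, hA0, hA1⟩ := aux_not_ac hac
    set m : Y → ℝ≥0∞ := fun y => ν ((fun x => (x, y)) ⁻¹' A) with hm
    have hmm : Measurable m := measurable_measure_prodMk_right hA
    set G : Set Y := {y | m y = 0} with hG
    have hGm : MeasurableSet G := hmm (measurableSet_singleton 0)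
    have hmQ : ∀ᵐ y ∂Q, y ∈ G := by
      rw [Measure.prod_apply_symm hA, lintegral_eq_zero_iff hmm] at hA0
      exact hA0
    have hpi : ∀ᵐ z ∂pi, z.2 ∈ G := ae_of_ae_map measurable_snd.aemeasurable hmQ
    refine ⟨A ∩ Prod.snd ⁻¹' G, hA.inter (measurable_snd hGm), ?_, fun t _ y => ?_⟩
    · intro h0
      apply hA1
      rw [measure_eq_zero_iff_ae_notMem] at h0 ⊢
      filter_upwards [h0, hpi] with z hz hz' hzA
      exact hz ⟨hzA, hz'⟩
    · have hz : ν ((fun x => (x, y)) ⁻¹' (A ∩ Prod.snd ⁻¹' G)) = 0 := by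
        by_cases hy : y ∈ G
        · exact measure_mono_null (fun x hx => hx.1) hy
        · convert measure_empty (μ := ν)
          ext x
          simp [hy]
      exact aux_ind ν _ hz t

lemma aux_chain {X Y : Type*} [MeasurableSpace X] [MeasurableSpace Y]
    (ν P : Measure X) [IsProbabilityMeasure ν] [IsProbabilityMeasure P]
    (pi : Measure (X × Y)) [IsProbabilityMeasure pi] (Q : Measure Y) [IsProbabilityMeasure Q]
    (hP : pi.map Prod.fst = P)
    (h1 : KL P ν ≠ ⊤) (h2 : KL P ν ≠ ⊥)
    (h3 : KL pi (ν.prod Q) ≠ ⊤) (h4 : KL pi (ν.prod Q) ≠ ⊥) :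
    ∃ a b : ℝ, KL P ν = a ∧ KL pi (ν.prod Q) = b ∧ KL pi (P.prod Q) = ((b - a : ℝ) : EReal) := by
  have hPac : P ≪ ν := by
    by_contra h
    exact h1 (if_neg h)
  have hac : pi ≪ ν.prod Q := by
    by_contra h
    exact h3 (if_neg h)
  rw [KL, if_pos hPac] at h1 h2
  rw [KL, if_pos hac] at h3 h4
  have hi1 := aux_eInt_fin (aux_logm _ _).aemeasurable h1 h2
  have hi2 := aux_eInt_fin (aux_logm _ _).aemeasurable h3 h4
  set f := P.rnDeriv ν with hf
  have hfm : Measurable f := Measure.measurable_rnDeriv _ _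
  have hprod : P.prod Q = (ν.prod Q).withDensity (fun z => f z.1) := by
    conv_lhs => rw [← Measure.withDensity_rnDeriv_eq P ν hPac]
    exact prod_withDensity_left hfm
  have hfpos : ∀ᵐ z ∂pi, 0 < f z.1 ∧ f z.1 < ⊤ := by
    have : ∀ᵐ x ∂(pi.map Prod.fst), 0 < f x ∧ f x < ⊤ := by
      rw [hP]
      exact (Measure.rnDeriv_pos hPac).and (hPac.ae_le (Measure.rnDeriv_lt_top P ν))
    exact ae_of_ae_map measurable_fst.aemeasurable this
  have hac2 : pi ≪ P.prod Q := by
    refine Measure.AbsolutelyContinuous.mk fun s hs h0 => ?_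
    have h0' : ∀ᵐ z ∂(P.prod Q), z ∉ s := measure_eq_zero_iff_ae_notMem.1 h0
    have hfm2 : Measurable (fun z : X × Y => f z.1) := hfm.comp measurable_fst
    rw [hprod, ae_withDensity_iff hfm2] at h0'
    rw [measure_eq_zero_iff_ae_notMem]
    filter_upwards [hac.ae_le h0', hfpos] with z hz hz'
    exact hz hz'.1.ne'
  have hac3 : P.prod Q ≪ ν.prod Q := hPac.prod Measure.AbsolutelyContinuous.rfl
  have hrn : (P.prod Q).rnDeriv (ν.prod Q) =ᵐ[ν.prod Q] fun z => f z.1 := by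
    rw [hprod]
    exact Measure.rnDeriv_withDensity _ (hfm.comp measurable_fst)
  have hch : pi.rnDeriv (P.prod Q) * (P.prod Q).rnDeriv (ν.prod Q) =ᵐ[ν.prod Q]
    pi.rnDeriv (ν.prod Q) := Measure.rnDeriv_mul_rnDeriv hac2
  have hlog : (fun z => Real.log ((pi.rnDeriv (P.prod Q) z).toReal)) =ᵐ[pi]
      fun z => Real.log ((pi.rnDeriv (ν.prod Q) z).toReal) - Real.log ((f z.1).toReal) := by
    filter_upwards [hac.ae_le hrn, hac.ae_le hch, hfpos, Measure.rnDeriv_pos hac2,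
      hac2.ae_le (Measure.rnDeriv_lt_top pi (P.prod Q))] with z e1 e2 e3 e4 e5
    rw [← e2, Pi.mul_apply, e1, ENNReal.toReal_mul, Real.log_mul]
    · ring
    · exact (ENNReal.toReal_pos e4.ne' e5.ne).ne'
    · exact (ENNReal.toReal_pos e3.1.ne' e3.2.ne).ne'
  have hlm : Measurable fun x => Real.log ((f x).toReal) := aux_logm P ν
  have hi1' : Integrable (fun x => Real.log ((f x).toReal)) (pi.map Prod.fst) := by rwa [hP]
  have hi3 : Integrable (fun z : X × Y => Real.log ((f z.1).toReal)) pi :=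
    hi1'.comp_measurable measurable_fst
  have hIntEq : ∫ z, Real.log ((f z.1).toReal) ∂pi = ∫ x, Real.log ((f x).toReal) ∂P := by
    conv_rhs => rw [← hP]
    exact (integral_map measurable_fst.aemeasurable hlm.aestronglyMeasurable).symm
  refine ⟨∫ x, Real.log ((f x).toReal) ∂P,
    ∫ z, Real.log ((pi.rnDeriv (ν.prod Q) z).toReal) ∂pi, ?_, ?_, ?_⟩
  rotate_left 2
  · have hi4 : Integrable (fun z => Real.log ((pi.rnDeriv (ν.prod Q) z).toReal)
      - Real.log ((f z.1).toReal)) pi := hi2.sub hi3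
    rw [KL, if_pos hac2, aux_eInt_congr hlog, aux_eInt_integrable hi4,
      integral_sub hi2 hi3, hIntEq]
  · rw [KL, if_pos hPac, aux_eInt_integrable hi1]
  · rw [KL, if_pos hac, aux_eInt_integrable hi2]

/-- if `S^ν(P)` and `H^ν(π)` are finite, then
`IG(π, P) := −H^P(π) = S^ν(P) − H^ν(π)`; equivalently, with `Q` the `y`-marginal of `π`,
`D_KL(π | P × Q) = D_KL(π | ν × Q) − D_KL(P | ν)`. -/
theorem statement9 {X Y : Type*} [MeasurableSpace X] [MeasurableSpace Y]
    (ν P : Measure X) [IsProbabilityMeasure ν] [IsProbabilityMeasure P]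
    (pi : Measure (X × Y)) [IsProbabilityMeasure pi]
    (hP : pi.map Prod.fst = P)
    (hS1 : SEnt ν P ≠ ⊥) (hS2 : SEnt ν P ≠ ⊤)
    (hH1 : Hnu ν pi ≠ ⊥) (hH2 : Hnu ν pi ≠ ⊤) :
    - Hnu P pi = SEnt ν P - Hnu ν pi
    ∧ KL pi (P.prod (pi.map Prod.snd))
        = KL pi (ν.prod (pi.map Prod.snd)) - KL P ν := by
  have : IsProbabilityMeasure (pi.map Prod.snd) :=
    Measure.isProbabilityMeasure_map measurable_snd.aemeasurable
  rw [aux_SEnt] at hS1 hS2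
  rw [aux_Hnu] at hH1 hH2
  obtain ⟨a, b, ha, hb, hab⟩ := aux_chain ν P pi (pi.map Prod.snd) hP
    (fun h => hS1 (by rw [h]; rfl)) (fun h => hS2 (by rw [h]; rfl))
    (fun h => hH1 (by rw [h]; rfl)) (fun h => hH2 (by rw [h]; rfl))
  rw [aux_Hnu, aux_Hnu, aux_SEnt, ha, hb, hab]
  constructor
  · rw [neg_neg, ← EReal.coe_neg, ← EReal.coe_neg, ← EReal.coe_sub]
    congr 1
    ring
  · rw [EReal.coe_sub]

end
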